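/- For every n ≥ 1 and every x ∈ H_n(ℍ_ℂ), the characteristic polynomial of the complex matrix x̂ ∈ M_{2n}(ℂ) equals q², where q is the monic degree-n complex polynomial q(λ) = dt_n(λ·𝟏 − x); consequently every eigenvalue of x̂ has even algebraic multiplicity, and dt_n(x) equals the product of the eigenvalues of x̂, each counted with half its algebraic multiplicity. -/

import Mathlib

/-!
The theorem is proved by Gaussian elimination on polynomial families of hermitian matrices.

If the top-left entry of a hermitian `A` is the scalar `a ≠ 0` and `S` is its Schur complement,
then `dt(A) = a · dt(S)` by definition, while `det Â = a² · det Ŝ` by the block determinant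
formula (`det_hatM`). To avoid denominators, `S` is replaced by `a S`; this is harmless because
`dt` is homogeneous (`IsDtSeq.smul`, by the recursion and continuity).

Consider matrices of biquaternion polynomials that are hermitian and of the form
`X ^ d · 𝟏 + (terms of degree < d)`. This class contains `X · 𝟏 − A` (with `d = 1`) and is stable
under `A ↦ a S`, with `d` replaced by `2 d` (`Leading.schurPoly`); in particular the pivot is
always a monic polynomial, so never identically zero. By induction on the size (`dt_family`), `dt`
of such a family is a monic polynomial `q` with `det Â = q²`: if `g` is the polynomial of `a S`,
then `(a ^ n)² · det Â = g²`, so `a ^ n` divides `g` as `ℂ[X]` is integrally closed, and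
`q = g / a ^ n` agrees with `dt` off the roots of `a`, hence everywhere by continuity.

Applied to `X · 𝟏 − A` this gives the square root `q` of the characteristic polynomial; the
formula for `dt(A)` is Vieta's formula for `q(0) = dt(−A)` together with homogeneity.
-/

noncomputable section

open Matrix

/-- The biquaternions `ℍ_ℂ`: quaternions with complex coefficients. -/
abbrev HC : Type := Quaternion ℂ

/-- The embedding `ℂ ⊆ ℍ_ℂ` as scalar biquaternions. -/
def cq (z : ℂ) : HC := ⟨z, 0, 0, 0⟩

/-- The `ℂ`-linear involution `x ↦ x⋄` (quaternion conjugation). -/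
def qdia (x : HC) : HC := ⟨x.re, -x.imI, -x.imJ, -x.imK⟩

/-- Coefficientwise complex conjugation `x ↦ x̄`. -/
def qbar (x : HC) : HC :=
  ⟨starRingEnd ℂ x.re, starRingEnd ℂ x.imI, starRingEnd ℂ x.imJ, starRingEnd ℂ x.imK⟩

/-- The conjugate-linear involution `x* = (x̄)⋄`. -/
def qstar (x : HC) : HC := qdia (qbar x)

/-- The natural (Euclidean/product) topology on the biquaternions `ℍ_ℂ ≅ ℂ⁴`. -/
instance : TopologicalSpace HC :=
  TopologicalSpace.induced (fun q : HC => (q.re, q.imI, q.imJ, q.imK)) inferInstance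

/-- The 2×2 complex matrix `x̂` associated to a biquaternion `x`. -/
def hat (x : HC) : Matrix (Fin 2) (Fin 2) ℂ :=
  !![x.re + Complex.I * x.imI, x.imJ + Complex.I * x.imK;
     -x.imJ + Complex.I * x.imK, x.re - Complex.I * x.imI]

/-- The `2n × 2n` complex matrix `Â` obtained by replacing every biquaternion entry `a`
of `A` by the 2×2 block `â`. -/
def hatM {n : ℕ} (A : Matrix (Fin n) (Fin n) HC) :
    Matrix (Fin n × Fin 2) (Fin n × Fin 2) ℂ :=
  Matrix.of fun p q => hat (A p.1 q.1) p.2 q.2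

/-- `A` is `⋄`-hermitian: `Aᵈ = A`, i.e. `(A j i)⋄ = A i j` for all `i j`.
`H_n(ℍ_ℂ)` is the collection of all such matrices. -/
def IsHerm {n : ℕ} (A : Matrix (Fin n) (Fin n) HC) : Prop :=
  ∀ i j, qdia (A j i) = A i j

/-- The defining properties of the sequence of determinants `(dt_n)_{n ≥ 1}`:
`D n` plays the role of `dt_{n+1} : H_{n+1}(ℍ_ℂ) → ℍ_ℂ`.
(i) continuity on `H_{n+1}(ℍ_ℂ)`; (ii) `dt₁((x₁₁)) = x₁₁`;
(iii) the inductive formula for `dt_{n+1}` when `x₁₁ ≠ 0`. -/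
def IsDtSeq (D : ∀ n : ℕ, Matrix (Fin (n + 1)) (Fin (n + 1)) HC → HC) : Prop :=
  (∀ n : ℕ, ContinuousOn (D n) {A | IsHerm A}) ∧
  (∀ A : Matrix (Fin 1) (Fin 1) HC, IsHerm A → D 0 A = A 0 0) ∧
  (∀ (n : ℕ) (A : Matrix (Fin (n + 2)) (Fin (n + 2)) HC), IsHerm A → A 0 0 ≠ 0 →
    D (n + 1) A = A 0 0 *
      D n (Matrix.of fun i j : Fin (n + 1) =>
        A i.succ j.succ - Ring.inverse (A 0 0) * A i.succ 0 * A 0 j.succ))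

open Polynomial Quaternion

/-! ### Topology and arithmetic of `ℍ_ℂ` -/

theorem continuous_HC {X : Type*} [TopologicalSpace X] {f : X → HC}
    (h1 : Continuous fun x => (f x).re) (h2 : Continuous fun x => (f x).imI)
    (h3 : Continuous fun x => (f x).imJ) (h4 : Continuous fun x => (f x).imK) :
    Continuous f :=
  continuous_induced_rng.2 (h1.prodMk (h2.prodMk (h3.prodMk h4)))

theorem continuous_coords : Continuous fun q : HC => (q.re, q.imI, q.imJ, q.imK) :=
  continuous_induced_dom

instance : T2Space HC :=
  T2Space.of_injective_continuous (f := fun q : HC => (q.re, q.imI, q.imJ, q.imK))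
    (fun x y h => by
      simp only [Prod.mk.injEq] at h
      exact Quaternion.ext _ _ h.1 h.2.1 h.2.2.1 h.2.2.2) continuous_coords

instance : ContinuousConstSMul ℂ HC where
  continuous_const_smul c := by
    have h := continuous_coords
    have h1 : Continuous fun q : HC => q.re := h.fst
    have h2 : Continuous fun q : HC => q.imI := h.snd.fst
    have h3 : Continuous fun q : HC => q.imJ := h.snd.snd.fst
    have h4 : Continuous fun q : HC => q.imK := h.snd.snd.snd
    apply continuous_HC <;> simp only [Quaternion.re_smul, Quaternion.imI_smul,
      Quaternion.imJ_smul, Quaternion.imK_smul] <;> fun_prop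

@[simp] theorem cq_re (z : ℂ) : (cq z).re = z := rfl
@[simp] theorem cq_imI (z : ℂ) : (cq z).imI = 0 := rfl
@[simp] theorem cq_imJ (z : ℂ) : (cq z).imJ = 0 := rfl
@[simp] theorem cq_imK (z : ℂ) : (cq z).imK = 0 := rfl
@[simp] theorem qdia_re (x : HC) : (qdia x).re = x.re := rfl
@[simp] theorem qdia_imI (x : HC) : (qdia x).imI = -x.imI := rfl
@[simp] theorem qdia_imJ (x : HC) : (qdia x).imJ = -x.imJ := rfl
@[simp] theorem qdia_imK (x : HC) : (qdia x).imK = -x.imK := rfl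

theorem cq_mul (a b : ℂ) : cq a * cq b = cq (a * b) := by
  ext <;> simp

theorem cq_mul_eq_smul (a : ℂ) (x : HC) : cq a * x = a • x := by
  ext <;> simp

theorem smul_cq (a b : ℂ) : a • cq b = cq (a * b) := by
  ext <;> simp

theorem smul_mul_HC (a : ℂ) (x y : HC) : (a • x) * y = a • (x * y) := by
  ext <;> simp <;> ring

theorem mul_smul_HC (a : ℂ) (x y : HC) : x * (a • y) = a • (x * y) := by
  ext <;> simp <;> ring

theorem zero_smul_matrix {n : ℕ} (A : Matrix (Fin n) (Fin n) HC) : (0 : ℂ) • A = 0 := by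
  ext1 i j
  ext <;> simp

theorem inverse_cq {a : ℂ} (ha : a ≠ 0) : Ring.inverse (cq a) = cq a⁻¹ := by
  have h1 : cq a * cq a⁻¹ = 1 := by
    rw [cq_mul, mul_inv_cancel₀ ha]; rfl
  have h2 : cq a⁻¹ * cq a = 1 := by
    rw [cq_mul, inv_mul_cancel₀ ha]; rfl
  exact Ring.inverse_unit ⟨cq a, cq a⁻¹, h1, h2⟩

theorem IsHerm.diag {n : ℕ} {A : Matrix (Fin n) (Fin n) HC} (hA : IsHerm A) (i : Fin n) :
    A i i = cq (A i i).re := by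
  have h := hA i i
  have hI := congrArg QuaternionAlgebra.imI h
  have hJ := congrArg QuaternionAlgebra.imJ h
  have hK := congrArg QuaternionAlgebra.imK h
  simp only [qdia_imI, qdia_imJ, qdia_imK, neg_eq_self] at hI hJ hK
  ext <;> simp [hI, hJ, hK]

theorem IsHerm.smul {n : ℕ} {A : Matrix (Fin n) (Fin n) HC} (hA : IsHerm A) (c : ℂ) :
    IsHerm (c • A) := by
  intro i j
  rw [Matrix.smul_apply, Matrix.smul_apply, ← hA i j]
  ext <;> simp

theorem IsHerm.add_smul_one {n : ℕ} {A : Matrix (Fin n) (Fin n) HC} (hA : IsHerm A) (c : ℂ) :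
    IsHerm (A + c • (1 : Matrix (Fin n) (Fin n) HC)) := by
  intro i j
  rw [Matrix.add_apply, Matrix.add_apply, ← hA i j, Matrix.smul_apply, Matrix.smul_apply]
  by_cases hij : i = j
  · subst hij
    ext <;> simp
  · ext <;> simp [Matrix.one_apply_ne hij, Matrix.one_apply_ne (Ne.symm hij)]

/-! ### Schur complements and homogeneity -/

/-- The Schur complement of the top-left entry, for pivot value `a`. -/
def schur {n : ℕ} (a : ℂ) (A : Matrix (Fin (n + 1)) (Fin (n + 1)) HC) :
    Matrix (Fin n) (Fin n) HC :=
  Matrix.of fun i j => A i.succ j.succ - a⁻¹ • (A i.succ 0 * A 0 j.succ)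

theorem qdia_mul (x y : HC) : qdia (x * y) = qdia y * qdia x := by
  ext <;> simp <;> ring

theorem IsHerm.schur {n : ℕ} {A : Matrix (Fin (n + 1)) (Fin (n + 1)) HC} (hA : IsHerm A)
    (a : ℂ) : IsHerm (schur a A) := by
  intro i j
  simp only [_root_.schur, Matrix.of_apply]
  rw [← hA i.succ j.succ, ← hA i.succ 0, ← hA 0 j.succ, ← qdia_mul]
  ext <;> simp <;> ring

theorem IsDtSeq.succ {D : ∀ n : ℕ, Matrix (Fin (n + 1)) (Fin (n + 1)) HC → HC}
    (hD : IsDtSeq D) {n : ℕ} {A : Matrix (Fin (n + 2)) (Fin (n + 2)) HC} (hA : IsHerm A)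
    {a : ℂ} (ha : a ≠ 0) (h00 : A 0 0 = cq a) :
    D (n + 1) A = a • D n (schur a A) := by
  have hne : A 0 0 ≠ 0 := by
    rw [h00]
    exact fun h => ha (congrArg QuaternionAlgebra.re h)
  rw [hD.2.2 n A hA hne, h00, cq_mul_eq_smul, inverse_cq ha]
  simp only [cq_mul_eq_smul, smul_mul_HC, schur]

theorem IsDtSeq.continuous_comp {D : ∀ n : ℕ, Matrix (Fin (n + 1)) (Fin (n + 1)) HC → HC}
    (hD : IsDtSeq D) {n : ℕ} {γ : ℂ → Matrix (Fin (n + 1)) (Fin (n + 1)) HC}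
    (hγ : Continuous γ) (hH : ∀ z, IsHerm (γ z)) : Continuous fun z => D n (γ z) :=
  (hD.1 n).comp_continuous hγ hH

/-- `dt_{n+1}` (here `D n`) is homogeneous of degree `n + 1`. The recursion gives this when the top-left entry is
nonzero; the other case is the limit along `A + s·𝟏` as `s → 0`. -/
theorem IsDtSeq.smul {D : ∀ n : ℕ, Matrix (Fin (n + 1)) (Fin (n + 1)) HC → HC}
    (hD : IsDtSeq D) {c : ℂ} (hc : c ≠ 0) (n : ℕ) :
    ∀ A : Matrix (Fin (n + 1)) (Fin (n + 1)) HC, IsHerm A →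
      D n (c • A) = c ^ (n + 1) • D n A := by
  induction n with
  | zero =>
    intro A hA
    rw [hD.2.1 _ hA, hD.2.1 _ (hA.smul c)]
    simp
  | succ n ih =>
    have key : ∀ A : Matrix (Fin (n + 2)) (Fin (n + 2)) HC, IsHerm A → (A 0 0).re ≠ 0 →
        D (n + 1) (c • A) = c ^ (n + 2) • D (n + 1) A := by
      intro A hA h0
      have h00 := hA.diag 0
      generalize (A 0 0).re = a at h0 h00
      have h00' : (c • A) 0 0 = cq (c * a) := by
        rw [Matrix.smul_apply, h00, smul_cq]
      have hS : schur (c * a) (c • A) = c • schur a A := by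
        ext1 i j
        simp only [schur, Matrix.of_apply, Matrix.smul_apply, smul_mul_HC, mul_smul_HC, smul_sub,
          smul_smul]
        congr 2
        field_simp
      rw [hD.succ hA h0 h00, hD.succ (hA.smul c) (mul_ne_zero hc h0) h00', hS,
        ih _ (hA.schur a), smul_smul, smul_smul]
      congr 1
      ring
    intro A hA
    by_cases h0 : (A 0 0).re = 0
    · have hpath : Continuous fun s : ℂ => A + s • (1 : Matrix (Fin (n + 2)) (Fin (n + 2)) HC) := by
        refine continuous_matrix fun i j => ?_
        apply continuous_HC <;> simp <;> fun_prop
      have hE : (fun s : ℂ => D (n + 1) (c • (A + s • (1 : Matrix (Fin (n + 2)) (Fin (n + 2)) HC))))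
          = fun s : ℂ => c ^ (n + 2) • D (n + 1) (A + s • 1) := by
        refine Continuous.ext_on (dense_compl_singleton (0 : ℂ))
          (hD.continuous_comp (hpath.const_smul c) fun s => (hA.add_smul_one s).smul c)
          ((continuous_const_smul (c ^ (n + 2))).comp
            (hD.continuous_comp hpath fun s => hA.add_smul_one s)) ?_
        intro s hs
        refine key _ (hA.add_smul_one s) ?_
        simpa [h0] using hs
      simpa only [zero_smul_matrix, add_zero] using congrFun hE 0
    · exact key A hA h0

theorem hatM_smul {n : ℕ} (c : ℂ) (A : Matrix (Fin n) (Fin n) HC) :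
    hatM (c • A) = c • hatM A := by
  ext ⟨i, k⟩ ⟨j, l⟩
  fin_cases k <;> fin_cases l <;> simp [hatM, hat] <;> ring

/-- Index bookkeeping that splits off the first `2 × 2` block. -/
def blockEquiv (n : ℕ) : Fin 2 ⊕ (Fin n × Fin 2) ≃ Fin (n + 1) × Fin 2 where
  toFun := Sum.elim (fun k => (0, k)) (fun p => (p.1.succ, p.2))
  invFun p := Fin.cases (Sum.inl p.2) (fun i => Sum.inr (i, p.2)) p.1
  left_inv x := by rcases x with k | ⟨i, k⟩ <;> rfl
  right_inv p := by
    rcases p with ⟨i, k⟩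
    refine Fin.cases rfl (fun i => rfl) i

/-- The block determinant formula for the first `2 × 2` block `a · 1` of `Â`. -/
theorem det_hatM {n : ℕ} {A : Matrix (Fin (n + 1)) (Fin (n + 1)) HC} {a : ℂ} (ha : a ≠ 0)
    (h00 : A 0 0 = cq a) : (hatM A).det = a ^ 2 * (hatM (schur a A)).det := by
  set M := (hatM A).submatrix (blockEquiv n) (blockEquiv n) with hM
  have h11 : M.toBlocks₁₁ = a • (1 : Matrix (Fin 2) (Fin 2) ℂ) := by
    ext k l
    fin_cases k <;> fin_cases l <;>
      simp [hM, Matrix.toBlocks₁₁, blockEquiv, hatM, hat, h00]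
  let inv : Invertible M.toBlocks₁₁ := ⟨a⁻¹ • 1, by rw [h11]; simp [smul_smul, ha],
    by rw [h11]; simp [smul_smul, ha]⟩
  have hS : M.toBlocks₂₂ - M.toBlocks₂₁ * ⅟(M.toBlocks₁₁) * M.toBlocks₁₂ = hatM (schur a A) := by
    have : ⅟(M.toBlocks₁₁) = a⁻¹ • 1 := rfl
    rw [this]
    ext ⟨i, k⟩ ⟨j, l⟩
    fin_cases k <;> fin_cases l <;>
      simp [hM, Matrix.toBlocks₂₂, Matrix.toBlocks₂₁, Matrix.toBlocks₁₂, blockEquiv, hatM, hat,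
        schur, Matrix.mul_apply] <;> ring_nf <;> simp only [Complex.I_sq] <;> ring
  rw [← Matrix.det_submatrix_equiv_self (blockEquiv n), ← hM, ← Matrix.fromBlocks_toBlocks M,
    Matrix.det_fromBlocks₁₁, hS, h11]
  simp

/-! ### Polynomial families of hermitian matrices -/

/-- Evaluation at `z ∈ ℂ` of a biquaternion with polynomial coefficients. -/
def evq (z : ℂ) (x : Quaternion ℂ[X]) : HC :=
  ⟨x.re.eval z, x.imI.eval z, x.imJ.eval z, x.imK.eval z⟩

@[simp] theorem evq_re (z : ℂ) (x : Quaternion ℂ[X]) : (evq z x).re = x.re.eval z := rfl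
@[simp] theorem evq_imI (z : ℂ) (x : Quaternion ℂ[X]) : (evq z x).imI = x.imI.eval z := rfl
@[simp] theorem evq_imJ (z : ℂ) (x : Quaternion ℂ[X]) : (evq z x).imJ = x.imJ.eval z := rfl
@[simp] theorem evq_imK (z : ℂ) (x : Quaternion ℂ[X]) : (evq z x).imK = x.imK.eval z := rfl

/-- Entrywise evaluation of a matrix over `ℍ_ℂ[X]`. -/
def evM {n : ℕ} (z : ℂ) (A : Matrix (Fin n) (Fin n) (Quaternion ℂ[X])) :
    Matrix (Fin n) (Fin n) HC :=
  Matrix.of fun i j => evq z (A i j)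

theorem continuous_evM {n : ℕ} (A : Matrix (Fin n) (Fin n) (Quaternion ℂ[X])) :
    Continuous fun z => evM z A := by
  refine continuous_matrix fun i j => ?_
  apply continuous_HC <;> simp only [evM, Matrix.of_apply, evq_re, evq_imI, evq_imJ, evq_imK] <;>
    exact Polynomial.continuous _

theorem exists_det_poly {n : ℕ} (A : Matrix (Fin n) (Fin n) (Quaternion ℂ[X])) :
    ∃ P : ℂ[X], ∀ z, (hatM (evM z A)).det = P.eval z := by
  refine ⟨Matrix.det (Matrix.of fun p q : Fin n × Fin 2 =>
    (!![(A p.1 q.1).re + C Complex.I * (A p.1 q.1).imI,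
        (A p.1 q.1).imJ + C Complex.I * (A p.1 q.1).imK;
        -(A p.1 q.1).imJ + C Complex.I * (A p.1 q.1).imK,
        (A p.1 q.1).re - C Complex.I * (A p.1 q.1).imI] :
      Matrix (Fin 2) (Fin 2) ℂ[X]) p.2 q.2), fun z => ?_⟩
  rw [← Polynomial.coe_evalRingHom, RingHom.map_det]
  congr 1
  ext ⟨i, k⟩ ⟨j, l⟩
  fin_cases k <;> fin_cases l <;> simp [hatM, hat, evM]

/-- All four coefficients of `x` have degree less than `d`. -/
def DegLT (d : ℕ) (x : Quaternion ℂ[X]) : Prop :=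
  x.re.degree < d ∧ x.imI.degree < d ∧ x.imJ.degree < d ∧ x.imK.degree < d

theorem degree_mul_lt {d e : ℕ} {p q : ℂ[X]} (hp : p.degree < d) (hq : q.degree ≤ e) :
    (p * q).degree < ((d + e : ℕ) : WithBot ℕ) := by
  rcases eq_or_ne p 0 with rfl | hp0
  · simp
  rcases eq_or_ne q 0 with rfl | hq0
  · simp
  rw [degree_eq_natDegree (mul_ne_zero hp0 hq0), natDegree_mul hp0 hq0]
  rw [degree_eq_natDegree hp0] at hp
  rw [degree_eq_natDegree hq0] at hq
  norm_cast at *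
  omega

theorem degree_add_lt' {d : ℕ} {p q : ℂ[X]} (hp : p.degree < d) (hq : q.degree < d) :
    (p + q).degree < d :=
  (degree_add_le p q).trans_lt (max_lt hp hq)

theorem degree_sub_lt' {d : ℕ} {p q : ℂ[X]} (hp : p.degree < d) (hq : q.degree < d) :
    (p - q).degree < d :=
  (degree_sub_le p q).trans_lt (max_lt hp hq)

theorem DegLT.mul {d e : ℕ} {x y : Quaternion ℂ[X]} (hx : DegLT d x) (hy : DegLT e y) :
    DegLT (d + e) (x * y) := by
  obtain ⟨x1, x2, x3, x4⟩ := hx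
  obtain ⟨y1, y2, y3, y4⟩ := hy
  have key : ∀ {p q : ℂ[X]}, p.degree < d → q.degree < e →
      (p * q).degree < ((d + e : ℕ) : WithBot ℕ) := fun hp hq => degree_mul_lt hp hq.le
  refine ⟨?_, ?_, ?_, ?_⟩
  · rw [Quaternion.re_mul]
    exact degree_sub_lt' (degree_sub_lt' (degree_sub_lt' (key x1 y1) (key x2 y2)) (key x3 y3))
      (key x4 y4)
  · rw [Quaternion.imI_mul]
    exact degree_sub_lt' (degree_add_lt' (degree_add_lt' (key x1 y2) (key x2 y1)) (key x3 y4))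
      (key x4 y3)
  · rw [Quaternion.imJ_mul]
    exact degree_add_lt' (degree_add_lt' (degree_sub_lt' (key x1 y3) (key x2 y4)) (key x3 y1))
      (key x4 y2)
  · rw [Quaternion.imK_mul]
    exact degree_add_lt' (degree_sub_lt' (degree_add_lt' (key x1 y4) (key x2 y3)) (key x3 y2))
      (key x4 y1)

theorem DegLT.smul {d e : ℕ} {x : Quaternion ℂ[X]} (hx : DegLT d x) {p : ℂ[X]}
    (hp : p.degree ≤ e) : DegLT (d + e) (p • x) := by
  obtain ⟨x1, x2, x3, x4⟩ := hx
  refine ⟨?_, ?_, ?_, ?_⟩ <;> simp only [Quaternion.re_smul, Quaternion.imI_smul,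
    Quaternion.imJ_smul, Quaternion.imK_smul, smul_eq_mul, mul_comm p] <;>
  exact degree_mul_lt (by assumption) hp

theorem DegLT.sub {d : ℕ} {x y : Quaternion ℂ[X]} (hx : DegLT d x) (hy : DegLT d y) :
    DegLT d (x - y) :=
  ⟨degree_sub_lt' hx.1 hy.1, degree_sub_lt' hx.2.1 hy.2.1, degree_sub_lt' hx.2.2.1 hy.2.2.1,
    degree_sub_lt' hx.2.2.2 hy.2.2.2⟩

/-- `A` is a `⋄`-hermitian matrix of biquaternion polynomials of the form
`X ^ d · 𝟏 + (terms of degree < d)`. -/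
structure Leading {n : ℕ} (d : ℕ) (A : Matrix (Fin n) (Fin n) (Quaternion ℂ[X])) : Prop where
  herm : ∀ i j, star (A j i) = A i j
  monic : ∀ i, (A i i).re.Monic
  natDegree : ∀ i, (A i i).re.natDegree = d
  off : ∀ i j, i ≠ j → DegLT d (A i j)

theorem Leading.isHerm {n d : ℕ} {A : Matrix (Fin n) (Fin n) (Quaternion ℂ[X])}
    (hA : Leading d A) (z : ℂ) : IsHerm (evM z A) := by
  intro i j
  simp only [evM, Matrix.of_apply]
  rw [← hA.herm i j]
  ext <;> simp

/-- The Schur complement of the top-left entry multiplied by that entry, so that no division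
is needed. -/
def schurPoly {n : ℕ} (A : Matrix (Fin (n + 1)) (Fin (n + 1)) (Quaternion ℂ[X])) :
    Matrix (Fin n) (Fin n) (Quaternion ℂ[X]) :=
  Matrix.of fun i j => (A 0 0).re • A i.succ j.succ - A i.succ 0 * A 0 j.succ

theorem schur_evM {n : ℕ} (A : Matrix (Fin (n + 1)) (Fin (n + 1)) (Quaternion ℂ[X])) {z : ℂ}
    (hz : (A 0 0).re.eval z ≠ 0) :
    schur ((A 0 0).re.eval z) (evM z A) =
      ((A 0 0).re.eval z)⁻¹ • evM z (schurPoly A) := by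
  ext1 i j
  simp only [schur, evM, schurPoly, Matrix.of_apply, Matrix.smul_apply]
  ext <;> simp <;> field_simp

/-- The shape `X ^ d · 𝟏 + (lower terms)` is preserved by one elimination step, with `d`
replaced by `2 d`. -/
theorem Leading.schurPoly {n d : ℕ}
    {A : Matrix (Fin (n + 1)) (Fin (n + 1)) (Quaternion ℂ[X])} (hA : Leading d A) :
    Leading (d + d) (schurPoly A) := by
  have hdeg : ∀ i, (A i i).re.degree = d := fun i => by
    rw [degree_eq_natDegree (hA.monic i).ne_zero, hA.natDegree i]
  have hmul : ∀ i j : Fin n, DegLT (d + d) (A i.succ 0 * A 0 j.succ) := fun i j =>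
    (hA.off _ _ (Fin.succ_ne_zero i)).mul (hA.off _ _ (Fin.succ_ne_zero j).symm)
  have hdiag : ∀ i : Fin n, ((A 0 0).re * (A i.succ i.succ).re).degree = (d + d : ℕ) := fun i => by
    rw [degree_mul, hdeg, hdeg]; rfl
  have hlt : ∀ i : Fin n, (A i.succ 0 * A 0 i.succ).re.degree <
      ((A 0 0).re * (A i.succ i.succ).re).degree := fun i => by
    rw [hdiag]; exact (hmul i i).1
  refine ⟨fun i j => ?_, fun i => ?_, fun i => ?_, fun i j hij => ?_⟩
  · simp only [_root_.schurPoly, Matrix.of_apply]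
    rw [← hA.herm i.succ j.succ, ← hA.herm i.succ 0, ← hA.herm 0 j.succ]
    ext1 <;> simp <;> ring
  · exact ((hA.monic 0).mul (hA.monic i.succ)).sub_of_left (hlt i)
  · refine natDegree_eq_of_degree_eq_some ?_
    exact (degree_sub_eq_left_of_degree_lt (hlt i)).trans (hdiag i)
  · exact ((hA.off _ _ fun h => hij (Fin.succ_injective _ h)).smul (hdeg 0).le).sub (hmul i j)

theorem dense_eval_ne_zero {p : ℂ[X]} (hp : p ≠ 0) : Dense {z : ℂ | p.eval z ≠ 0} := by
  have h : {z : ℂ | p.eval z ≠ 0} = ((p.roots.toFinset : Set ℂ))ᶜ := by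
    ext z
    simp [hp]
  rw [h]
  rw [Set.compl_eq_univ_sdiff]
  exact dense_univ.sdiff_finset _

theorem eq_of_dense_eval {p a b : ℂ[X]} (hp : p ≠ 0)
    (h : ∀ z, p.eval z ≠ 0 → a.eval z = b.eval z) : a = b := by
  refine Polynomial.funext fun z => ?_
  exact congrFun (Continuous.ext_on (dense_eval_ne_zero hp) a.continuous b.continuous h) z

theorem continuous_cq_eval (q : ℂ[X]) : Continuous fun z => cq (q.eval z) := by
  apply continuous_HC <;> simp only [cq_re, cq_imI, cq_imJ, cq_imK]
  · exact q.continuous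
  all_goals exact continuous_const

/-- Along a polynomial family `A` of the form `X ^ d · 𝟏 + (lower terms)`, `dt` is a monic
polynomial whose square is the determinant of the complex matrix. For the step, `g` is the
polynomial of the cleared Schur complement and `a` the pivot: the determinant identity
`(a ^ n)² · det Â = g²` forces `a ^ n ∣ g` in `ℂ[X]`, and the quotient is `dt`, at the roots of
`a` by continuity. -/
theorem dt_family {D : ∀ n : ℕ, Matrix (Fin (n + 1)) (Fin (n + 1)) HC → HC}
    (hD : IsDtSeq D) (n : ℕ) :
    ∀ (d : ℕ) (A : Matrix (Fin (n + 1)) (Fin (n + 1)) (Quaternion ℂ[X])), Leading d A →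
      ∃ q : ℂ[X], q.Monic ∧ q.natDegree = d * (n + 1) ∧
        ∀ z, D n (evM z A) = cq (q.eval z) ∧ (hatM (evM z A)).det = q.eval z ^ 2 := by
  induction n with
  | zero =>
    intro d A hA
    refine ⟨(A 0 0).re, hA.monic 0, by rw [hA.natDegree 0, zero_add, mul_one], fun z => ?_⟩
    have h00 : evM z A 0 0 = cq ((A 0 0).re.eval z) := (hA.isHerm z).diag 0
    refine ⟨by rw [hD.2.1 _ (hA.isHerm z), h00], ?_⟩
    have : hatM (evM z A) = (A 0 0).re.eval z • (1 : Matrix (Fin 1 × Fin 2) (Fin 1 × Fin 2) ℂ) := by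
      ext ⟨i, k⟩ ⟨j, l⟩
      obtain rfl : i = 0 := Subsingleton.elim (α := Fin 1) i 0
      obtain rfl : j = 0 := Subsingleton.elim (α := Fin 1) j 0
      fin_cases k <;> fin_cases l <;> simp [hatM, hat, h00]
    rw [this]
    simp
  | succ n ih =>
    intro d A hA
    obtain ⟨g, gm, gd, hg⟩ := ih _ _ hA.schurPoly
    obtain ⟨P, hP⟩ := exists_det_poly A
    have am := hA.monic 0
    have had := hA.natDegree 0
    have hS : ∀ z, (A 0 0).re.eval z ≠ 0 → _ := fun z => schur_evM A (z := z)
    have h00 : ∀ z, evM z A 0 0 = cq ((A 0 0).re.eval z) := fun z => (hA.isHerm z).diag 0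
    generalize (A 0 0).re = a at am had hS h00
    -- One elimination step gives `det Â(z) = a² · (a⁻¹)^(2(n+1)) · g²` wherever the pivot `a`
    -- does not vanish, hence a polynomial identity.
    have hdet : (a ^ n) ^ 2 * P = g ^ 2 := by
      refine eq_of_dense_eval am.ne_zero fun z hz => ?_
      have h1 := det_hatM hz (h00 z)
      rw [hS z hz, hatM_smul, Matrix.det_smul, (hg z).2, hP] at h1
      simp only [Fintype.card_prod, Fintype.card_fin] at h1
      simp only [eval_mul, eval_pow, h1, inv_pow]
      field_simp
      ring
    obtain ⟨q, rfl⟩ : a ^ n ∣ g :=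
      (IsIntegrallyClosed.pow_dvd_pow_iff two_ne_zero).1 ⟨P, hdet.symm⟩
    have hPq : P = q ^ 2 := by
      rw [mul_pow] at hdet
      exact mul_left_cancel₀ (pow_ne_zero _ (pow_ne_zero _ am.ne_zero)) hdet
    have qm : q.Monic := (am.pow n).of_mul_monic_left gm
    refine ⟨q, qm, ?_, fun z => ⟨?_, by rw [hP, hPq, eval_pow]⟩⟩
    · rw [(am.pow n).natDegree_mul qm, am.natDegree_pow, had] at gd
      have : n * d + q.natDegree = n * d + d * (n + 1 + 1) := by rw [gd]; ring
      omega
    · refine congrFun (Continuous.ext_on (dense_eval_ne_zero am.ne_zero)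
        (hD.continuous_comp (continuous_evM A) hA.isHerm) (continuous_cq_eval q) ?_) z
      intro z hz
      have hz : a.eval z ≠ 0 := hz
      simp only
      rw [hD.succ (hA.isHerm z) hz (h00 z), hS z hz,
        hD.smul (inv_ne_zero hz) n _ (hA.schurPoly.isHerm z), (hg z).1, smul_cq, smul_cq,
        eval_mul, eval_pow, inv_pow]
      congr 1
      field_simp
      ring

/-! ### The pencil and the characteristic polynomial -/

/-- The pencil `X · 𝟏 − A`. -/
def pencil {n : ℕ} (A : Matrix (Fin n) (Fin n) HC) :
    Matrix (Fin n) (Fin n) (Quaternion ℂ[X]) :=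
  Matrix.of fun i j =>
    ⟨(if i = j then X else 0) - C (A i j).re, -C (A i j).imI, -C (A i j).imJ, -C (A i j).imK⟩

theorem pencil_re {n : ℕ} (A : Matrix (Fin n) (Fin n) HC) (i j : Fin n) :
    (pencil A i j).re = (if i = j then X else 0) - C (A i j).re := rfl
theorem pencil_imI {n : ℕ} (A : Matrix (Fin n) (Fin n) HC) (i j : Fin n) :
    (pencil A i j).imI = -C (A i j).imI := rfl
theorem pencil_imJ {n : ℕ} (A : Matrix (Fin n) (Fin n) HC) (i j : Fin n) :
    (pencil A i j).imJ = -C (A i j).imJ := rfl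
theorem pencil_imK {n : ℕ} (A : Matrix (Fin n) (Fin n) HC) (i j : Fin n) :
    (pencil A i j).imK = -C (A i j).imK := rfl

theorem evM_pencil {n : ℕ} (A : Matrix (Fin n) (Fin n) HC) (z : ℂ) :
    evM z (pencil A) = z • (1 : Matrix (Fin n) (Fin n) HC) - A := by
  ext1 i j
  by_cases hij : i = j
  · subst hij
    ext <;> simp [evM, pencil_re, pencil_imI, pencil_imJ, pencil_imK]
  · ext <;> simp [evM, pencil_re, pencil_imI, pencil_imJ, pencil_imK, hij]

theorem leading_pencil {n : ℕ} {A : Matrix (Fin n) (Fin n) HC} (hA : IsHerm A) :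
    Leading 1 (pencil A) := by
  have hC : ∀ c : ℂ, (-C c).degree < ((1 : ℕ) : WithBot ℕ) := fun c => by
    rw [degree_neg]
    exact degree_C_le.trans_lt (by norm_num)
  refine ⟨fun i j => ?_, fun i => ?_, fun i => ?_, fun i j hij => ?_⟩
  · ext1 <;> simp only [Quaternion.re_star, Quaternion.imI_star, Quaternion.imJ_star,
      Quaternion.imK_star, pencil_re, pencil_imI, pencil_imJ, pencil_imK] <;> rw [← hA i j] <;> simp [eq_comm]
  · simpa [pencil_re] using monic_X_sub_C _
  · simp [pencil_re]
  · refine ⟨?_, hC _, hC _, hC _⟩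
    simpa [pencil_re, hij] using hC (A i j).re

theorem hatM_pencil {n : ℕ} (A : Matrix (Fin n) (Fin n) HC) (z : ℂ) :
    hatM (z • (1 : Matrix (Fin n) (Fin n) HC) - A) = Matrix.scalar _ z - hatM A := by
  ext ⟨i, k⟩ ⟨j, l⟩
  by_cases hij : i = j
  · subst hij
    fin_cases k <;> fin_cases l <;> simp [hatM, hat] <;> ring
  · fin_cases k <;> fin_cases l <;> simp [hatM, hat, hij] <;> ring

/-- For every `n ≥ 1` and `x ∈ H_n(ℍ_ℂ)` (here `D n = dt_{n+1}`),
the characteristic polynomial of `x̂` equals `q²`, where `q` is the monic degree-`n`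
complex polynomial `q(λ) = dt_n(λ·𝟏 − x)`; consequently every eigenvalue of `x̂` has even
algebraic multiplicity, and `dt_n(x)` is the product of the eigenvalues of `x̂`, each
counted with half its algebraic multiplicity (i.e. the product of the roots of `q`). -/
theorem statement3 (D : ∀ n : ℕ, Matrix (Fin (n + 1)) (Fin (n + 1)) HC → HC)
    (hD : IsDtSeq D) (n : ℕ) (A : Matrix (Fin (n + 1)) (Fin (n + 1)) HC)
    (hA : IsHerm A) :
    ∃ q : Polynomial ℂ, q.Monic ∧ q.natDegree = n + 1 ∧
      (∀ z : ℂ, cq (Polynomial.eval z q) =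
        D n (z • (1 : Matrix (Fin (n + 1)) (Fin (n + 1)) HC) - A)) ∧
      Matrix.charpoly (hatM A) = q ^ 2 ∧
      (∀ μ : ℂ, Even ((Matrix.charpoly (hatM A)).rootMultiplicity μ)) ∧
      D n A = cq q.roots.prod := by
  obtain ⟨q, qm, qd, hq⟩ := dt_family hD n 1 _ (leading_pencil hA)
  simp only [evM_pencil] at hq
  have hchar : Matrix.charpoly (hatM A) = q ^ 2 := by
    refine Polynomial.funext fun z => ?_
    rw [Matrix.eval_charpoly, ← hatM_pencil, (hq z).2, eval_pow]
  refine ⟨q, qm, by rw [qd, one_mul], fun z => (hq z).1.symm, hchar, fun μ => ?_, ?_⟩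
  · rw [hchar, ← count_roots, roots_pow, Multiset.count_nsmul]
    exact even_two_mul _
  -- `q(0) = dt(-A)`, so homogeneity cancels the sign `(-1)^(n+1)` in Vieta's formula.
  · have h0 := (hq 0).1
    rw [zero_smul_matrix, zero_sub] at h0
    have hneg : A = (-1 : ℂ) • (-A) := by
      ext1 i j
      ext <;> simp
    have hH : IsHerm (-A) := by
      intro i j
      rw [Matrix.neg_apply, Matrix.neg_apply, ← hA i j]
      ext <;> simp
    have hv := (IsAlgClosed.splits q).coeff_zero_eq_prod_roots_of_monic qm
    rw [hneg, hD.smul (neg_ne_zero.2 one_ne_zero) n _ hH, h0, smul_cq, ← coeff_zero_eq_eval_zero,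
      hv, qd, one_mul, ← mul_assoc, ← mul_pow]
    simp
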